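/- arXiv:1004.3146 — 2 statements merged into one kernel-verified Lean document; each statement's English description precedes it below -/
import Mathlib

section
/- Let k > 1/2. Let Θ be uniform on [0,2π) and R independent with density (2k-1)(1-r²)^{k-3/2}·r on (0,1) (suitably normalized to be a probability density). Then R·sin Θ has the symmetric beta-type density proportional to (1-t²)^{k-1} on (-1,1), i.e., R·sin Θ ~ ν_k where ν_k(dt) = (2^{1-2k}Γ(2k)/Γ(k)²)(1-t²)^{k-1}·1_{(-1,1)}(t)dt. -/
open MeasureTheory Real

namespace Stmt13Aux

open scoped ENNReal

noncomputable def W (k s : ℝ) : ℝ≥0∞ := if s < 1 then ENNReal.ofReal ((1 - s) ^ (k - 3 / 2)) else 0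

lemma measurable_W (k : ℝ) : Measurable (W k) :=
  Measurable.ite measurableSet_Iio (by fun_prop) (by fun_prop)

lemma scale {c : ℝ} (hc : 0 < c) {f : ℝ → ℝ≥0∞} (hf : Measurable f) :
    ∫⁻ x, f x = ENNReal.ofReal c * ∫⁻ u, f (c * u) := by
  conv_lhs => rw [← Real.smul_map_volume_mul_left hc.ne']
  rw [lintegral_smul_measure, lintegral_map hf (by fun_prop), abs_of_pos hc, smul_eq_mul]

lemma betaW {k : ℝ} (hk : 1 / 2 < k) : ∫⁻ u, W k (u ^ 2) =
    ENNReal.ofReal (2 * (4 ^ (k - 3 / 2) * ProbabilityTheory.beta (k - 1 / 2) (k - 1 / 2))) := by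
  have hb := ProbabilityTheory.beta_pos (α := k - 1 / 2) (β := k - 1 / 2) (by linarith) (by linarith)
  have hm := measurable_W k
  rw [scale two_pos (by fun_prop), ENNReal.ofReal_mul two_pos.le,
    ← lintegral_sub_right_eq_self _ (1 / 2 : ℝ)]
  congr 1
  rw [← mul_one (ENNReal.ofReal (4 ^ (k - 3 / 2) * _)), ← ProbabilityTheory.lintegral_betaPDF_eq_one
    (α := k - 1 / 2) (β := k - 1 / 2) (by linarith) (by linarith),
    ← lintegral_const_mul' _ _ ENNReal.ofReal_ne_top]
  refine lintegral_congr fun u => ?_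
  rw [ProbabilityTheory.betaPDF_eq, W]
  by_cases h : 0 < u ∧ u < 1
  · have h1 : (2 * (u - 1 / 2)) ^ 2 < 1 := by nlinarith [mul_pos h.1 (sub_pos.2 h.2)]
    rw [if_pos h, if_pos h1, ← ENNReal.ofReal_mul (by positivity)]
    congr 1
    rw [show 1 - (2 * (u - 1 / 2)) ^ 2 = 4 * (u * (1 - u)) by ring,
      Real.mul_rpow (by norm_num) (mul_pos h.1 (sub_pos.2 h.2)).le,
      Real.mul_rpow h.1.le (sub_pos.2 h.2).le, show k - 1 / 2 - 1 = k - 3 / 2 by ring]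
    generalize ProbabilityTheory.beta (k - 1 / 2) (k - 1 / 2) = b at hb
    field_simp
  · have h1 : ¬ (2 * (u - 1 / 2)) ^ 2 < 1 := by
      intro h1
      apply h
      constructor <;> nlinarith
    rw [if_neg h, if_neg h1]
    simp

lemma inner_W {k : ℝ} (y : ℝ) : ∫⁻ x, W k (x ^ 2 + y ^ 2) =
    (if y ^ 2 < 1 then ENNReal.ofReal ((1 - y ^ 2) ^ (k - 1)) else 0) * ∫⁻ u, W k (u ^ 2) := by
  have hm := measurable_W k
  split_ifs with h
  · have h0 : 0 < 1 - y ^ 2 := sub_pos.2 h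
    have hc := Real.sqrt_pos.2 h0
    rw [scale hc (by fun_prop), ← lintegral_const_mul' _ _ ENNReal.ofReal_ne_top,
      ← lintegral_const_mul' _ _ ENNReal.ofReal_ne_top]
    refine lintegral_congr fun u => ?_
    rw [mul_pow, Real.sq_sqrt h0.le, W, W]
    by_cases hu : u ^ 2 < 1
    · have h1 : (1 - y ^ 2) * u ^ 2 + y ^ 2 < 1 := by nlinarith
      rw [if_pos hu, if_pos h1, ← ENNReal.ofReal_mul hc.le, ← ENNReal.ofReal_mul (by positivity)]
      congr 1
      rw [show 1 - ((1 - y ^ 2) * u ^ 2 + y ^ 2) = (1 - y ^ 2) * (1 - u ^ 2) by ring,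
        Real.mul_rpow h0.le (by linarith), Real.sqrt_eq_rpow, ← mul_assoc, ← Real.rpow_add h0]
      ring_nf
    · have h1 : ¬ (1 - y ^ 2) * u ^ 2 + y ^ 2 < 1 := by
        intro h1
        apply hu
        by_contra h2
        nlinarith
      rw [if_neg hu, if_neg h1]
      simp
  · rw [zero_mul, ← lintegral_zero (μ := volume (α := ℝ))]
    refine lintegral_congr fun x => ?_
    rw [W, if_neg (by nlinarith [sq_nonneg x])]

lemma const_eq {k : ℝ} (hk : 1 / 2 < k) :
    (2 * π)⁻¹ * (2 * k - 1) *
      (2 * (4 ^ (k - 3 / 2) * ProbabilityTheory.beta (k - 1 / 2) (k - 1 / 2))) =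
    2 ^ (1 - 2 * k) * Real.Gamma (2 * k) / Real.Gamma k ^ 2 := by
  have hd := Real.Gamma_mul_Gamma_add_half (k - 1 / 2)
  have hg := Real.Gamma_add_one (s := 2 * k - 1) (by linarith)
  have p1 := Real.Gamma_pos_of_pos (s := k) (by linarith)
  have p2 := Real.Gamma_pos_of_pos (s := 2 * k - 1) (by linarith)
  rw [show k - 1 / 2 + 1 / 2 = k by ring, show 2 * (k - 1 / 2) = 2 * k - 1 by ring] at hd
  rw [show 2 * k - 1 + 1 = 2 * k by ring] at hg
  rw [hg, ProbabilityTheory.beta, show k - 1 / 2 + (k - 1 / 2) = 2 * k - 1 by ring]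
  have e1 : (4 : ℝ) ^ (k - 3 / 2) = 2 ^ (2 * k - 3) := by
    rw [show (4 : ℝ) = 2 ^ (2 : ℝ) by norm_num, ← Real.rpow_mul (by norm_num)]
    ring_nf
  have e2 : Real.Gamma (k - 1 / 2) =
      Real.Gamma (2 * k - 1) * 2 ^ (1 - (2 * k - 1)) * √π / Real.Gamma k := by
    rw [← hd]; field_simp
  rw [e1, e2]
  have e3 : (2 : ℝ) ^ (2 * k - 3) * (2 ^ (1 - (2 * k - 1))) ^ 2 = 2 ^ (1 - 2 * k) := by
    rw [← Real.rpow_mul_natCast (by norm_num), ← Real.rpow_add (by norm_num)]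
    congr 1; push_cast; ring
  rw [← e3]
  have := Real.sq_sqrt pi_pos.le
  field_simp
  rw [this]
  ring

lemma period (g : ℝ → ℝ≥0∞) :
    ∫⁻ θ in Set.Ico 0 (2 * π), g (Real.sin θ) = ∫⁻ θ in Set.Ioo (-π) π, g (Real.sin θ) := by
  have a := isAddFundamentalDomain_Ioc two_pi_pos 0
  have b := isAddFundamentalDomain_Ioc two_pi_pos (-π)
  rw [setLIntegral_congr Ico_ae_eq_Ioc, setLIntegral_congr Ioo_ae_eq_Ioc]
  have hp : Function.Periodic (fun θ => g (Real.sin θ)) (2 * π) := fun θ => by simp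
  have := a.setLIntegral_eq b (fun θ => g (Real.sin θ)) hp.map_vadd_zmultiples
  rw [zero_add, show -π + 2 * π = π by ring] at this
  exact this

end Stmt13Aux

open Stmt13Aux in
theorem stmt_13 (k : ℝ) (hk : 1 / 2 < k)
    (μR : Measure ℝ)
    (hμR : μR = (volume.restrict (Set.Ioo (0 : ℝ) 1)).withDensity
      (fun r => ENNReal.ofReal ((2 * k - 1) * (1 - r ^ 2) ^ (k - 3 / 2) * r)))
    (μΘ : Measure ℝ)
    (hμΘ : μΘ = (ENNReal.ofReal (2 * π))⁻¹ • volume.restrict (Set.Ico 0 (2 * π))) :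
    Measure.map (fun p : ℝ × ℝ => p.1 * Real.sin p.2) (μR.prod μΘ) =
      (volume.restrict (Set.Ioo (-1 : ℝ) 1)).withDensity
        (fun t => ENNReal.ofReal
          (2 ^ (1 - 2 * k) * Real.Gamma (2 * k) / Real.Gamma k ^ 2 *
            (1 - t ^ 2) ^ (k - 1))) := by
  have hm := measurable_W k
  have hk1 : 0 < 2 * k - 1 := by linarith
  have : SFinite μΘ := by rw [hμΘ]; infer_instance
  have : SFinite μR := by rw [hμR]; infer_instance
  refine Measure.ext_of_lintegral _ fun f hf => ?_
  have hpi : (ENNReal.ofReal (2 * π))⁻¹ = ENNReal.ofReal (2 * π)⁻¹ :=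
    (ENNReal.ofReal_inv_of_pos two_pi_pos).symm
  -- the middle expression
  have key : ∫⁻ p : ℝ × ℝ, W k (p.1 ^ 2 + p.2 ^ 2) * f p.2 =
      ∫⁻ r in Set.Ioi (0 : ℝ), ∫⁻ θ in Set.Ioo (-π) π,
        ENNReal.ofReal r * (W k (r ^ 2) * f (r * Real.sin θ)) := by
    rw [← lintegral_comp_polarCoord_symm, polarCoord_target, Measure.volume_eq_prod,
      ← Measure.prod_restrict, lintegral_prod _ (by
        simp only [polarCoord_symm_apply]; fun_prop)]
    refine lintegral_congr fun r => lintegral_congr fun θ => ?_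
    simp only [polarCoord_symm_apply, smul_eq_mul]
    rw [show (r * Real.cos θ) ^ 2 + (r * Real.sin θ) ^ 2 = r ^ 2 by
      linear_combination r ^ 2 * Real.sin_sq_add_cos_sq θ]
  have lhs : ∫⁻ t, f t ∂(Measure.map (fun p : ℝ × ℝ => p.1 * Real.sin p.2) (μR.prod μΘ)) =
      ENNReal.ofReal ((2 * π)⁻¹ * (2 * k - 1)) *
        ∫⁻ p : ℝ × ℝ, W k (p.1 ^ 2 + p.2 ^ 2) * f p.2 := by
    rw [lintegral_map hf (by fun_prop), lintegral_prod _ (by fun_prop), hμR,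
      lintegral_withDensity_eq_lintegral_mul _ (by fun_prop)
        (Measurable.lintegral_prod_right' (f := fun p : ℝ × ℝ => f (p.1 * Real.sin p.2))
          (by fun_prop)), key,
      ← lintegral_const_mul' _ _ ENNReal.ofReal_ne_top,
      ← lintegral_indicator measurableSet_Ioo, ← lintegral_indicator measurableSet_Ioi]
    refine lintegral_congr fun r => ?_
    by_cases hr : r ∈ Set.Ioo (0 : ℝ) 1
    · have h0 : r ∈ Set.Ioi (0 : ℝ) := hr.1
      have h1 : r ^ 2 < 1 := by nlinarith [hr.1, hr.2]
      have h2 : 0 ≤ (1 - r ^ 2) ^ (k - 3 / 2) := Real.rpow_nonneg (by linarith) _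
      rw [Set.indicator_of_mem hr, Set.indicator_of_mem h0, Pi.mul_apply, hμΘ,
        lintegral_smul_measure, period (fun s => f (r * s)), hpi, smul_eq_mul,
        lintegral_const_mul' _ _ ENNReal.ofReal_ne_top, W, if_pos h1,
        lintegral_const_mul' _ _ ENNReal.ofReal_ne_top, ENNReal.ofReal_mul (by positivity),
        ENNReal.ofReal_mul hk1.le, ENNReal.ofReal_mul (by positivity)]
      ring
    · rw [Set.indicator_of_notMem hr]
      by_cases h0 : r ∈ Set.Ioi (0 : ℝ)
      · have h1 : ¬ r ^ 2 < 1 := by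
          intro h1
          exact hr ⟨h0, by nlinarith [Set.mem_Ioi.1 h0]⟩
        rw [Set.indicator_of_mem h0, W, if_neg h1]
        simp
      · rw [Set.indicator_of_notMem h0]
  rw [lhs, Measure.volume_eq_prod, lintegral_prod_symm _ (by fun_prop),
    lintegral_withDensity_eq_lintegral_mul _ (by fun_prop) hf,
    ← lintegral_const_mul' _ _ ENNReal.ofReal_ne_top, ← lintegral_indicator measurableSet_Ioo]
  refine lintegral_congr fun y => ?_
  simp only
  rw [lintegral_mul_const _ (by fun_prop), inner_W, betaW hk]
  have hb := ProbabilityTheory.beta_pos (α := k - 1 / 2) (β := k - 1 / 2) (by linarith) (by linarith)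
  by_cases hy : y ∈ Set.Ioo (-1 : ℝ) 1
  · have h1 : y ^ 2 < 1 := by nlinarith [hy.1, hy.2]
    rw [Set.indicator_of_mem hy, if_pos h1, Pi.mul_apply, ← const_eq hk]
    have hA : 0 ≤ (2 * π)⁻¹ * (2 * k - 1) := by positivity
    have hB : 0 ≤ 2 * (4 ^ (k - 3 / 2) * ProbabilityTheory.beta (k - 1 / 2) (k - 1 / 2)) := by
      positivity
    rw [ENNReal.ofReal_mul (mul_nonneg hA hB), ENNReal.ofReal_mul (q := 2 * (_ * _)) hA]
    ring
  · have h1 : ¬ y ^ 2 < 1 := fun h1 => hy (abs_lt.1 ((sq_lt_one_iff_abs_lt_one y).1 h1))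
    rw [Set.indicator_of_notMem hy, if_neg h1]
    simp
end

section
/- Let (X,Y) be bivariate Gaussian, centered, with Var X = Var Y = 1 and E[XY] = r, and let Φ be the standard normal CDF. Then E[Φ(X)Φ(Y)] = 1/2 - (1/(2π))·arccos(r/2). -/
open MeasureTheory ProbabilityTheory Real

/-- Standard normal CDF. -/
noncomputable def PhiC (x : ℝ) : ℝ :=
  (Real.sqrt (2 * π))⁻¹ * ∫ u in Set.Iic x, Real.exp (-u ^ 2 / 2)

lemma exp_form (u : ℝ) : Real.exp (-u ^ 2 / 2) = Real.exp (-(1/2) * u ^ 2) := by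
  congr 1; ring

lemma integrable_g : Integrable (fun u : ℝ => Real.exp (-u ^ 2 / 2)) := by
  simp_rw [exp_form]
  exact integrable_exp_neg_mul_sq (by norm_num)

lemma PhiC_eq_measure (x : ℝ) : PhiC x = (gaussianReal 0 1).real (Set.Iic x) := by
  rw [Measure.real, gaussianReal_apply_eq_integral _ one_ne_zero, ENNReal.toReal_ofReal
    (integral_nonneg fun _ => gaussianPDFReal_nonneg _ _ _)]
  simp [PhiC, gaussianPDFReal, integral_const_mul]

lemma PhiC_nonneg (x : ℝ) : 0 ≤ PhiC x := by
  rw [PhiC_eq_measure]; exact measureReal_nonneg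

lemma PhiC_le_one (x : ℝ) : PhiC x ≤ 1 := by
  rw [PhiC_eq_measure]; exact measureReal_le_one

lemma PhiC_hasDeriv (x : ℝ) :
    HasDerivAt PhiC ((Real.sqrt (2 * π))⁻¹ * Real.exp (-x ^ 2 / 2)) x := by
  have hc : Continuous (fun u : ℝ => Real.exp (-u ^ 2 / 2)) := by fun_prop
  have h1 : HasDerivAt (fun y => ∫ u in (0:ℝ)..y, Real.exp (-u ^ 2 / 2))
      (Real.exp (-x ^ 2 / 2)) x := hc.integral_hasStrictDerivAt 0 x |>.hasDerivAt
  have h2 : PhiC = fun y => (Real.sqrt (2 * π))⁻¹ *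
      ((∫ u in Set.Iic (0:ℝ), Real.exp (-u ^ 2 / 2)) +
        ∫ u in (0:ℝ)..y, Real.exp (-u ^ 2 / 2)) := by
    funext y
    rw [← intervalIntegral.integral_Iic_sub_Iic integrable_g.integrableOn
      integrable_g.integrableOn]
    simp [PhiC]
  rw [h2]
  exact (h1.const_add _).const_mul _

lemma PhiC_cont : Continuous PhiC :=
  continuous_iff_continuousAt.2 fun x => (PhiC_hasDeriv x).continuousAt

lemma PhiC_zero : PhiC 0 = 1 / 2 := by
  have h := integral_comp_neg_Iic (0:ℝ) (fun u : ℝ => Real.exp (-(1/2) * u ^ 2))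
  simp only [neg_sq, neg_zero] at h
  rw [integral_gaussian_Ioi] at h
  simp only [PhiC, exp_form]
  rw [h, show π / (1/2) = 2 * π by ring]
  have : √(2 * π) ≠ 0 := by positivity
  field_simp

lemma PhiC_conv (a b : ℝ) :
    ∫ z, PhiC (b + a * z) ∂(gaussianReal 0 1) = PhiC (b / √(1 + a ^ 2)) := by
  have hs : 0 < √(1 + a ^ 2) := by positivity
  have e1 : ((gaussianReal 0 1).map (fun x => (-a) * x)) ∗ gaussianReal 0 1
      = (gaussianReal 0 1).map (fun x => √(1 + a ^ 2) * x) := by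
    rw [gaussianReal_map_const_mul, gaussianReal_map_const_mul, gaussianReal_conv_gaussianReal]
    congr 1
    · simp
    · ext
      have := Real.sq_sqrt (show 0 ≤ 1 + a ^ 2 by positivity)
      simp [this, add_comm]
      rw [add_comm (a ^ 2) 1, this]
  have e2 := congrArg (fun m => ∫⁻ x, (Set.Iic b).indicator 1 x ∂m) e1
  have hm : Measurable ((Set.Iic b).indicator (1 : ℝ → ENNReal)) :=
    measurable_one.indicator measurableSet_Iic
  beta_reduce at e2
  rw [Measure.lintegral_conv hm, lintegral_map (by fun_prop) (by fun_prop),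
    lintegral_indicator_one measurableSet_Iic, Measure.map_apply (by fun_prop) measurableSet_Iic] at e2
  · have e3 : ∀ z : ℝ, ∫⁻ y, (Set.Iic b).indicator (1 : ℝ → ENNReal) (-a * z + y) ∂(gaussianReal 0 1)
        = ENNReal.ofReal (PhiC (b + a * z)) := by
      intro z
      rw [PhiC_eq_measure, ofReal_measureReal, ← lintegral_indicator_one measurableSet_Iic]
      congr 1
      funext y
      simp only [Set.indicator, Set.mem_Iic]
      congr 1
      apply propext
      constructor <;> intro h <;> linarith
    have e4 : (fun x => √(1 + a ^ 2) * x) ⁻¹' Set.Iic b = Set.Iic (b / √(1 + a ^ 2)) := by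
      ext x; simp [le_div_iff₀ hs, mul_comm]
    rw [e4] at e2
    simp_rw [e3] at e2
    rw [integral_eq_lintegral_of_nonneg_ae (Filter.Eventually.of_forall fun _ => PhiC_nonneg _)
      (PhiC_cont.comp (by fun_prop)).aestronglyMeasurable, e2, PhiC_eq_measure, Measure.real]

lemma gauss_int (f : ℝ → ℝ) : ∫ x, f x ∂(gaussianReal 0 1) =
    (√(2 * π))⁻¹ * ∫ x, f x * Real.exp (-x ^ 2 / 2) := by
  rw [integral_gaussianReal_eq_integral_smul one_ne_zero, ← integral_const_mul]
  congr 1; funext x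
  simp [gaussianPDFReal]; ring

lemma deriv_val (c : ℝ) :
    ∫ x, PhiC x * ((√(2 * π))⁻¹ * Real.exp (-(c * x) ^ 2 / 2) * x) ∂(gaussianReal 0 1)
      = (1 / (2 * π)) * (1 / ((1 + c ^ 2) * √(2 + c ^ 2))) := by
  set s := √(2 * π) with hs
  have hs0 : 0 < s := by positivity
  have hs2 : s ^ 2 = 2 * π := Real.sq_sqrt (by positivity)
  set b := (1 + c ^ 2) / 2 with hb
  have hb0 : 0 < b := by positivity
  have hd : ∀ x : ℝ, HasDerivAt (fun x => Real.exp (-b * x ^ 2))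
      (-(2 * b) * (x * Real.exp (-b * x ^ 2))) x := by
    intro x
    have := ((hasDerivAt_pow 2 x).const_mul (-b)).exp
    refine this.congr_deriv ?_
    push_cast; ring
  have i1 := integrable_exp_neg_mul_sq hb0
  have i2 := integrable_mul_exp_neg_mul_sq hb0
  have bd : ∀ f : ℝ → ℝ, Integrable f → Integrable (PhiC * f) := by
    intro f hf
    refine hf.bdd_mul (c := 1) PhiC_cont.aestronglyMeasurable
      (Filter.Eventually.of_forall fun x => ?_)
    rw [Real.norm_of_nonneg (PhiC_nonneg x)]; exact PhiC_le_one x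
  have hprod : ∀ x : ℝ, s⁻¹ * Real.exp (-x ^ 2 / 2) * Real.exp (-b * x ^ 2)
      = s⁻¹ * Real.exp (-(b + 1/2) * x ^ 2) := by
    intro x
    rw [mul_assoc, ← Real.exp_add]; congr 2; ring
  have ibp := integral_mul_deriv_eq_deriv_mul_of_integrable (u := PhiC)
    (v := fun x => Real.exp (-b * x ^ 2))
    (u' := fun x => s⁻¹ * Real.exp (-x ^ 2 / 2))
    (v' := fun x => -(2 * b) * (x * Real.exp (-b * x ^ 2)))
    (fun x _ => PhiC_hasDeriv x) (fun x _ => hd x) (bd _ (i2.const_mul _))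
    (by
      refine Integrable.congr ((integrable_exp_neg_mul_sq
        (show 0 < b + 1/2 by positivity)).const_mul s⁻¹) (Filter.Eventually.of_forall fun x => ?_)
      exact (hprod x).symm) (bd _ i1)
  simp only [hprod] at ibp
  rw [integral_const_mul, integral_gaussian] at ibp
  have e1 : ∀ x : ℝ, PhiC x * (-(2 * b) * (x * Real.exp (-b * x ^ 2)))
     = -(2 * b) * (PhiC x * (x * Real.exp (-b * x ^ 2))) := fun x => by ring
  simp only [e1] at ibp
  rw [integral_const_mul] at ibp
  rw [gauss_int, ← hs]
  have e2 : ∀ x : ℝ, PhiC x * (s⁻¹ * Real.exp (-(c * x) ^ 2 / 2) * x) * Real.exp (-x ^ 2 / 2)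
     = s⁻¹ * (PhiC x * (x * Real.exp (-b * x ^ 2))) := by
    intro x
    have : Real.exp (-b * x ^ 2) = Real.exp (-(c * x) ^ 2 / 2) * Real.exp (-x ^ 2 / 2) := by
      rw [← Real.exp_add]; congr 1; rw [hb]; ring
    rw [this]; ring
  simp only [e2]
  rw [integral_const_mul]
  have e3 : √(π / (b + 1/2)) = s / √(2 + c ^ 2) := by
    rw [hs, ← Real.sqrt_div (by positivity)]; congr 1; rw [hb]; field_simp; ring
  rw [e3] at ibp
  set I := ∫ x, PhiC x * (x * Real.exp (-b * x ^ 2))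
  have hI : I = 1 / ((1 + c ^ 2) * √(2 + c ^ 2)) := by
    have h2 : (1 + c^2) * I = 1 / √(2 + c ^ 2) := by
      have : s⁻¹ * (s / √(2 + c ^ 2)) = 1 / √(2 + c ^ 2) := by field_simp
      rw [this] at ibp
      rw [hb] at ibp
      linarith
    have h3 : 0 < 1 + c ^ 2 := by positivity
    field_simp at h2 ⊢
    linarith
  rw [hI, ← hs2]
  field_simp

lemma J_deriv (c : ℝ) :
    HasDerivAt (fun c => ∫ x, PhiC x * PhiC (c * x) ∂(gaussianReal 0 1))
      ((1 / (2 * π)) * (1 / ((1 + c ^ 2) * √(2 + c ^ 2)))) c := by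
  rw [← deriv_val c]
  have cc : ∀ c : ℝ, Continuous fun x => PhiC x * PhiC (c * x) := fun c =>
    PhiC_cont.mul (PhiC_cont.comp (by fun_prop))
  have hxi : Integrable (fun x : ℝ => x) (gaussianReal 0 1) := by
    have := (memLp_id_gaussianReal (μ := 0) (v := 1) 1)
    rw [ENNReal.coe_one] at this
    exact memLp_one_iff_integrable.1 this
  refine (hasDerivAt_integral_of_dominated_loc_of_deriv_le (s := Set.univ)
    (F := fun c x => PhiC x * PhiC (c * x))
    (F' := fun c x => PhiC x * ((√(2 * π))⁻¹ * Real.exp (-(c * x) ^ 2 / 2) * x))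
    (bound := fun x => (√(2 * π))⁻¹ * |x|)
    Filter.univ_mem (Filter.Eventually.of_forall fun c => (cc c).aestronglyMeasurable)
    ?_ ?_ ?_ ?_ ?_).2
  · refine Integrable.of_bound (C := 1) (cc c).aestronglyMeasurable
      (Filter.Eventually.of_forall fun x => ?_)
    rw [Real.norm_of_nonneg (mul_nonneg (PhiC_nonneg _) (PhiC_nonneg _))]
    exact mul_le_one₀ (PhiC_le_one _) (PhiC_nonneg _) (PhiC_le_one _)
  · exact (PhiC_cont.mul (by fun_prop)).aestronglyMeasurable
  · refine Filter.Eventually.of_forall fun x c _ => ?_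
    rw [norm_mul, norm_mul, norm_mul, Real.norm_of_nonneg (PhiC_nonneg x), Real.norm_eq_abs x,
      Real.norm_of_nonneg (Real.exp_nonneg _),
      Real.norm_of_nonneg (show 0 ≤ (√(2 * π))⁻¹ by positivity)]
    have h1 : Real.exp (-(c * x) ^ 2 / 2) ≤ 1 := Real.exp_le_one_iff.2 (by nlinarith [sq_nonneg (c*x)])
    calc _ ≤ 1 * ((√(2 * π))⁻¹ * 1 * |x|) := by
          gcongr
          exact PhiC_le_one x
      _ = _ := by ring
  · exact hxi.abs.const_mul _
  · refine Filter.Eventually.of_forall fun x c _ => ?_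
    have h1 : HasDerivAt (fun c : ℝ => c * x) x c := by
      simpa using (hasDerivAt_id c).mul_const x
    exact ((PhiC_hasDeriv (c * x)).comp c h1).const_mul _

lemma A_deriv (c : ℝ) :
    HasDerivAt (fun c : ℝ => (1 / (2 * π)) * Real.arcsin (c / √(2 * (1 + c ^ 2))))
      ((1 / (2 * π)) * (1 / ((1 + c ^ 2) * √(2 + c ^ 2)))) c := by
  have hp : 0 < 2 * (1 + c ^ 2) := by positivity
  set w := √(2 * (1 + c ^ 2)) with hw
  have hw0 : 0 < w := Real.sqrt_pos.2 hp
  have hw2 : w ^ 2 = 2 * (1 + c ^ 2) := Real.sq_sqrt hp.le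
  have h1 : HasDerivAt (fun c : ℝ => 2 * (1 + c ^ 2)) (4 * c) c := by
    have := ((hasDerivAt_pow 2 c).const_add 1).const_mul 2
    refine this.congr_deriv ?_
    push_cast; ring
  have h2 := h1.sqrt hp.ne'
  have h3 := (hasDerivAt_id c).div h2 hw0.ne'
  have hlt : (c / w) ^ 2 < 1 := by
    rw [div_pow, hw2, div_lt_one hp]; nlinarith [sq_nonneg c]
  have h4 := hasDerivAt_arcsin (x := c / w) (by intro h; rw [h] at hlt; norm_num at hlt)
    (by intro h; rw [h] at hlt; norm_num at hlt)
  have h5 := (HasDerivAt.comp c h4 h3).const_mul (1 / (2 * π))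
  refine h5.congr_deriv ?_
  congr 1
  have hq : √(1 - (c / w) ^ 2) = √(2 + c ^ 2) / w := by
    rw [hw, ← Real.sqrt_div (by positivity), ← hw, div_pow, hw2]
    congr 1; field_simp; ring
  rw [hq]
  have hz : 0 < √(2 + c ^ 2) := by positivity
  simp only [id, ← hw]
  rw [hw2]
  have : (1 * w - c * (4 * c / (2 * w))) = 2 / w := by
    field_simp; rw [hw2]; ring
  rw [this]
  field_simp

lemma J_val (c : ℝ) : ∫ x, PhiC x * PhiC (c * x) ∂(gaussianReal 0 1)
    = 1 / 4 + (1 / (2 * π)) * Real.arcsin (c / √(2 * (1 + c ^ 2))) := by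
  have hD := fun c => (J_deriv c).sub (A_deriv c)
  have := is_const_of_deriv_eq_zero (fun c => (hD c).differentiableAt)
    (fun c => by rw [(hD c).deriv, sub_self]) c 0
  have h0 : ∫ x, PhiC x ∂(gaussianReal 0 1) = 1 / 2 := by
    have := PhiC_conv 1 0
    simp only [zero_add, one_mul, zero_div, PhiC_zero] at this
    exact this
  simp only [Pi.sub_apply, zero_mul, zero_div, Real.arcsin_zero, mul_zero, sub_zero, PhiC_zero,
    integral_mul_const, h0] at this
  linarith

theorem stmt_17 {Ω : Type*} [MeasureSpace Ω]
    [IsProbabilityMeasure (volume : Measure Ω)]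
    (r : ℝ) (hr : |r| ≤ 1) (X Z : Ω → ℝ)
    (hX : Measure.map X (volume : Measure Ω) = gaussianReal 0 1)
    (hZ : Measure.map Z (volume : Measure Ω) = gaussianReal 0 1)
    (hindep : IndepFun X Z)
    (Y : Ω → ℝ) (hY : Y = fun ω => r * X ω + Real.sqrt (1 - r ^ 2) * Z ω)
    (Φ : ℝ → ℝ)
    (hΦ : ∀ x, Φ x = (Real.sqrt (2 * π))⁻¹ * ∫ u in Set.Iic x, Real.exp (-u ^ 2 / 2)) :
    ∫ ω, Φ (X ω) * Φ (Y ω) = 1 / 2 - (1 / (2 * π)) * Real.arccos (r / 2) := by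
  obtain rfl : Φ = PhiC := funext hΦ
  subst hY
  have mX : AEMeasurable X volume :=
    AEMeasurable.of_map_ne_zero (by rw [hX]; exact IsProbabilityMeasure.ne_zero _)
  have mZ : AEMeasurable Z volume :=
    AEMeasurable.of_map_ne_zero (by rw [hZ]; exact IsProbabilityMeasure.ne_zero _)
  have hr2 : r ^ 2 ≤ 1 := by rw [← sq_abs]; nlinarith [abs_nonneg r]
  have hmap := (indepFun_iff_map_prod_eq_prod_map_map mX mZ).1 hindep
  rw [hX, hZ] at hmap
  set g : ℝ × ℝ → ℝ := fun p => PhiC p.1 * PhiC (r * p.1 + √(1 - r ^ 2) * p.2) with hg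
  have gc : Continuous g :=
    (PhiC_cont.comp (by fun_prop)).mul (PhiC_cont.comp (by fun_prop))
  have e1 : ∫ ω, PhiC (X ω) * PhiC (r * X ω + √(1 - r ^ 2) * Z ω)
      = ∫ p, g p ∂((gaussianReal 0 1).prod (gaussianReal 0 1)) := by
    rw [← hmap, integral_map (mX.prodMk mZ) gc.aestronglyMeasurable]
  have gi : Integrable g ((gaussianReal 0 1).prod (gaussianReal 0 1)) := by
    refine Integrable.of_bound (C := 1) gc.aestronglyMeasurable
      (Filter.Eventually.of_forall fun x => ?_)
    rw [Real.norm_of_nonneg (mul_nonneg (PhiC_nonneg _) (PhiC_nonneg _))]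
    exact mul_le_one₀ (PhiC_le_one _) (PhiC_nonneg _) (PhiC_le_one _)
  rw [e1, integral_prod _ gi]
  simp only [hg, integral_const_mul, PhiC_conv]
  rw [Real.sq_sqrt (by linarith), show 1 + (1 - r ^ 2) = 2 - r ^ 2 by ring]
  have hp : 0 < 2 - r ^ 2 := by linarith
  have e2 : ∀ x : ℝ, r * x / √(2 - r ^ 2) = (r / √(2 - r ^ 2)) * x := fun x => by ring
  simp only [e2]
  rw [J_val]
  have e3 : √(2 * (1 + (r / √(2 - r ^ 2)) ^ 2)) = 2 / √(2 - r ^ 2) := by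
    rw [div_pow, Real.sq_sqrt hp.le,
      show 2 * (1 + r ^ 2 / (2 - r ^ 2)) = 2 ^ 2 / (2 - r ^ 2) by field_simp; ring,
      Real.sqrt_div (by positivity), Real.sqrt_sq (by norm_num)]
  have hs : 0 < √(2 - r ^ 2) := Real.sqrt_pos.2 hp
  have e4 : r / √(2 - r ^ 2) / (2 / √(2 - r ^ 2)) = r / 2 := by field_simp
  rw [e3, e4, Real.arccos]
  field_simp
  ring
end
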